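/- (Directional lifting.) Let m ∈ C_b(ℝ²) be a bilinear multiplier from L^{p₁}(ℝ)×L^{p₂}(ℝ) to L^p(ℝ), d ≥ 1, and y ∈ ℝ^d. Define m̃_y(ξ,η) := m(ξ·y, η·y) for ξ,η ∈ ℝ^d. Then m̃_y is a bilinear multiplier from L^{p₁}(ℝ^d)×L^{p₂}(ℝ^d) to L^p(ℝ^d), and sup_{y∈ℝ^d} ‖m̃_y‖_{BM(ℝ^d)} ≤ 𝔠·‖m‖_{BM(ℝ)}, with 𝔠 = B_{p₁}B_{p₂}/A_p² if p < 1 and 1 otherwise. -/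

import Mathlib

/-!
The directional lift of a bilinear multiplier is bounded with constant `1`, so that the factor `𝔠`
only has to be shown to be at least `1`.

Fix a finite constant `C` admissible for `m` on `ℝ`.

* **Product case** (`BMB_prod`). The multiplier `(ξ, η) ↦ m (ξ₁, η₁)` on `ℝ × ℝⁿ` acts only on the
  first variable: for almost every `x'`, Fourier inversion in the remaining variables identifies the
  slice `B(f, g)(·, x')` with `B_m(f(·, x'), g(·, x'))` (`rBm_slice_ae`). The bound for `m` applies
  on each slice, and Hölder's inequality in `x'` with exponents `p₁ / p` and `p₂ / p` gives the
  bound for `(f, g)` with the same `C`.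
* **Direction `y ≠ 0`** (`BMB_dir`). Choose an invertible matrix `A` whose first column is `y`. The
  substitution `x = A u`, `ξ = A⁻ᵀ ω` preserves the pairing `ξ · x` and turns `ξ · y` into `ω 0`.
  By the homogeneity `1/p₁ + 1/p₂ = 1/p` the powers of `det A` cancel (`BMB_transfer`), which
  reduces the claim to the product case.
* **Direction `y = 0`** (`BMB_all`). Approximate by directions `y_k ≠ 0` tending to `0`. The
  operators converge pointwise by dominated convergence, and Fatou's lemma gives the same bound.

Finally `1 ≤ 𝔠` (`one_le_cc`). Testing Khintchine's inequalities on a single Rademacher function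
shows `B_{p₁}, B_{p₂} ≥ 1` and `A_p ≤ 1`, once the extremal constants are known to come from bounds
that really hold: for an empty or unbounded set the infimum and supremum would be the junk value
`0`. This requires proving Khintchine's inequality with some finite constant (`khin_upper`) and some
positive constant (`khin_lower`).
-/

open MeasureTheory Filter Topology
open scoped ENNReal
noncomputable section

/-- The character `e^{2πi ξ·x}` on `ℝ^ι`. -/
noncomputable def rch {ι : Type} [Fintype ι] (ξ x : ι → ℝ) : ℂ :=
  Complex.exp (2 * Real.pi * Complex.I * ((∑ i, ξ i * x i : ℝ) : ℂ))

/-- The Fourier transform on `ℝ^ι`. -/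
noncomputable def rft {ι : Type} [Fintype ι] (f : (ι → ℝ) → ℂ) (ξ : ι → ℝ) : ℂ :=
  ∫ x : ι → ℝ, (starRingEnd ℂ) (rch ξ x) * f x

/-- The bilinear multiplier operator on `ℝ^ι`. -/
noncomputable def rBm {ι : Type} [Fintype ι] (m : (ι → ℝ) → (ι → ℝ) → ℂ)
    (f g : (ι → ℝ) → ℂ) (x : ι → ℝ) : ℂ :=
  ∫ ξ : ι → ℝ, ∫ η : ι → ℝ, rft f ξ * rft g η * m ξ η * rch (ξ + η) x

/-- `f ∈ SL¹(ℝ^ι)`. -/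
def rSL1 {ι : Type} [Fintype ι] (f : (ι → ℝ) → ℂ) : Prop :=
  Integrable f ∧ Integrable (rft f)

/-- The `(L^{p₁}, L^{p₂}, L^p)` bilinear multiplier norm on `ℝ^ι`. -/
noncomputable def rBMnorm (ι : Type) [Fintype ι] (p₁ p₂ p : ℝ)
    (m : (ι → ℝ) → (ι → ℝ) → ℂ) : ℝ≥0∞ :=
  sInf {C | ∀ f g : (ι → ℝ) → ℂ, rSL1 f → rSL1 g →
    eLpNorm (rBm m f g) (ENNReal.ofReal p) volume ≤
      C * eLpNorm f (ENNReal.ofReal p₁) volume * eLpNorm g (ENNReal.ofReal p₂) volume}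
/-- The Rademacher system on `[0,1]`. -/
noncomputable def rademacher (j : ℕ) (t : ℝ) : ℝ := (-1 : ℝ) ^ (⌊t * 2 ^ (j + 1)⌋ : ℤ)

/-- The best constant `A_q` in Khintchine's inequality
`A_q (∑ |α_j|²)^{1/2} ≤ ‖∑ α_j r_j‖_{L^q[0,1]}`. -/
noncomputable def khintchineA (q : ℝ) : ℝ :=
  sSup {A : ℝ | 0 ≤ A ∧ ∀ (N : ℕ) (α : Fin N → ℝ),
    A * (∑ j, α j ^ 2) ^ (1/2 : ℝ) ≤
      (∫ t in (0:ℝ)..1, |∑ j, α j * rademacher j t| ^ q) ^ (1/q)}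

/-- The best constant `B_q` in Khintchine's inequality
`‖∑ α_j r_j‖_{L^q[0,1]} ≤ B_q (∑ |α_j|²)^{1/2}`. -/
noncomputable def khintchineB (q : ℝ) : ℝ :=
  sInf {B : ℝ | 0 ≤ B ∧ ∀ (N : ℕ) (α : Fin N → ℝ),
    (∫ t in (0:ℝ)..1, |∑ j, α j * rademacher j t| ^ q) ^ (1/q) ≤
      B * (∑ j, α j ^ 2) ^ (1/2 : ℝ)}

/-- The constant `𝔠 = B_{p₁}B_{p₂}/A_p²` if `p < 1`, and `𝔠 = 1` otherwise. -/
noncomputable def cc (p p₁ p₂ : ℝ) : ℝ :=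
  if p < 1 then khintchineB p₁ * khintchineB p₂ / (khintchineA p) ^ 2 else 1

/-! ### Fourier inversion almost everywhere on `ℝ^ι` -/

open FourierTransform RealInnerProductSpace in
/-- Fourier inversion almost everywhere, for an integrable `f` with integrable transform; `f` is not
assumed continuous. Both sides have the same pairing with every test function, by the
self-adjointness of `𝓕` and inversion for Schwartz functions. -/
theorem ae_inv_aux {V : Type*} [NormedAddCommGroup V] [InnerProductSpace ℝ V]
    [FiniteDimensional ℝ V] [MeasurableSpace V] [BorelSpace V] (f : V → ℂ)
    (hf : Integrable f) (hf' : Integrable (𝓕 f)) : f =ᵐ[volume] 𝓕⁻ (𝓕 f) := by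
  have flip : ∀ φ h : V → ℂ, Integrable φ → Integrable h →
      ∫ x, 𝓕 φ x * h x = ∫ x, φ x * 𝓕 h x := by
    intro φ h hφ hh
    have := VectorFourier.integral_fourierIntegral_smul_eq_flip (μ := (volume : Measure V))
      (ν := (volume : Measure V)) (f := φ) (g := h) (e := Real.fourierChar)
      (L := innerₗ V) Real.continuous_fourierChar (by exact continuous_inner) hφ hh
    simp only [flip_innerₗ, smul_eq_mul] at this
    exact this
  have hgc : Continuous (𝓕⁻ (𝓕 f)) := by
    rw [Real.fourierInv_eq_fourier_comp_neg]
    exact VectorFourier.fourierIntegral_continuous Real.continuous_fourierChar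
      (by exact continuous_inner) (hf'.comp_neg)
  have hloc : LocallyIntegrable (f - 𝓕⁻ (𝓕 f)) volume :=
    hf.locallyIntegrable.sub hgc.locallyIntegrable
  -- It suffices to test against smooth compactly supported `ψ`, written as `𝓕 φ` with `φ` Schwartz.
  have key : ∀ᵐ x, (f - 𝓕⁻ (𝓕 f)) x = 0 := by
    apply ae_eq_zero_of_integral_contDiff_smul_eq_zero hloc
    intro ψ hψ hc
    have hg₁ : HasCompactSupport (Complex.ofRealCLM ∘ ψ) := hc.comp_left rfl
    have hg₂ : ContDiff ℝ (⊤ : ℕ∞) (Complex.ofRealCLM ∘ ψ) := by fun_prop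
    set Ψ := hg₁.toSchwartzMap hg₂
    have hΨ : ∀ x, (ψ x : ℂ) = Ψ x := fun x => rfl
    have hΨi : Integrable (Ψ : V → ℂ) := Ψ.integrable
    have hneg : Integrable (fun x => Ψ (-x)) := hΨi.comp_neg
    set φ := 𝓕⁻ Ψ with hφ
    have hφΨ : 𝓕 (φ : V → ℂ) = Ψ := by
      rw [← SchwartzMap.fourier_coe, hφ, FourierTransform.fourier_fourierInv_eq]
    have hφ2 : 𝓕 (fun x => Ψ (-x)) = φ := by
      rw [hφ, SchwartzMap.fourierInv_coe, Real.fourierInv_eq_fourier_comp_neg]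
    have e1 : ∫ x, Ψ x * f x = ∫ x, φ x * 𝓕 f x := by
      rw [← flip φ f φ.integrable hf, hφΨ]
    have e2 : ∫ x, Ψ x * 𝓕⁻ (𝓕 f) x = ∫ x, φ x * 𝓕 f x := by
      rw [← hφ2, flip _ _ hneg hf', ← integral_neg_eq_self (fun x => Ψ x * _)]
      simp_rw [Real.fourierInv_eq_fourier_neg, neg_neg]
    have i1 : Integrable (fun x => ψ x • f x) := by
      refine (hf.locallyIntegrable.integrable_smul_left_of_hasCompactSupport hψ.continuous hc)
    have i2 : Integrable (fun x => ψ x • 𝓕⁻ (𝓕 f) x) := by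
      refine (hgc.locallyIntegrable.integrable_smul_left_of_hasCompactSupport hψ.continuous hc)
    simp only [Pi.sub_apply, smul_sub]
    rw [integral_sub i1 i2]
    simp only [Complex.real_smul, hΨ, e1, e2, sub_self]
  filter_upwards [key] with x hx
  exact sub_eq_zero.1 hx

theorem rch_eq {ι : Type} [Fintype ι] (ξ x : ι → ℝ) :
    rch ξ x = Complex.exp (((2 * Real.pi * ∑ i, ξ i * x i : ℝ)) * Complex.I) := by
  unfold rch; congr 1; push_cast; ring

theorem rch_conj {ι : Type} [Fintype ι] (ξ x : ι → ℝ) :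
    (starRingEnd ℂ) (rch ξ x) = rch (-ξ) x := by
  rw [rch_eq, rch_eq, ← Complex.exp_conj, map_mul, Complex.conj_ofReal, Complex.conj_I]
  simp

theorem norm_rch {ι : Type} [Fintype ι] (ξ x : ι → ℝ) : ‖rch ξ x‖ = 1 := by
  rw [rch_eq, Complex.norm_exp_ofReal_mul_I]

theorem rch_add {ι : Type} [Fintype ι] (ξ η x : ι → ℝ) :
    rch (ξ + η) x = rch ξ x * rch η x := by
  unfold rch; rw [← Complex.exp_add]; congr 1
  simp [add_mul, Finset.sum_add_distrib]; ring

theorem continuous_rch {ι : Type} [Fintype ι] :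
    Continuous fun z : (ι → ℝ) × (ι → ℝ) => rch z.1 z.2 := by
  unfold rch; fun_prop

open FourierTransform in
/-- `rft` agrees with Mathlib's Fourier transform once `ι → ℝ` carries its Euclidean structure. -/
theorem rft_eq {ι : Type} [Fintype ι] (f : (ι → ℝ) → ℂ) (ξ : EuclideanSpace ℝ ι) :
    rft f (WithLp.ofLp ξ) = 𝓕 (fun x : EuclideanSpace ℝ ι => f (WithLp.ofLp x)) ξ := by
  rw [Real.fourier_eq', rft, ← (PiLp.volume_preserving_ofLp ι).integral_comp
    (MeasurableEquiv.toLp 2 (ι → ℝ)).symm.measurableEmbedding]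
  congr 1; ext x
  rw [rch_conj, rch_eq, smul_eq_mul]
  simp [PiLp.inner_apply, mul_comm]

open FourierTransform in
/-- The inverse transform with kernel `rch` agrees with Mathlib's inverse Fourier transform. -/
theorem rfi_eq {ι : Type} [Fintype ι] (F : (ι → ℝ) → ℂ) (x : EuclideanSpace ℝ ι) :
    ∫ ξ, F ξ * rch ξ (WithLp.ofLp x) =
      𝓕⁻ (fun x : EuclideanSpace ℝ ι => F (WithLp.ofLp x)) x := by
  rw [Real.fourierInv_eq', ← (PiLp.volume_preserving_ofLp ι).integral_comp
    (MeasurableEquiv.toLp 2 (ι → ℝ)).symm.measurableEmbedding]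
  congr 1; ext x
  rw [rch_eq, smul_eq_mul, mul_comm]
  simp [PiLp.inner_apply, mul_comm]

theorem ae_inv {ι : Type} [Fintype ι] {f : (ι → ℝ) → ℂ} (hf : rSL1 f) :
    ∀ᵐ x, f x = ∫ ξ, rft f ξ * rch ξ x := by
  have emb := (MeasurableEquiv.toLp 2 (ι → ℝ)).symm.measurableEmbedding
  have mp := PiLp.volume_preserving_ofLp ι
  have h1 := ae_inv_aux (fun x : EuclideanSpace ℝ ι => f (WithLp.ofLp x))
    ((mp.integrable_comp_emb emb).2 hf.1) (by
      have := (mp.integrable_comp_emb emb).2 hf.2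
      refine this.congr (Eventually.of_forall fun ξ => ?_)
      exact rft_eq f ξ)
  have mp' := PiLp.volume_preserving_toLp ι
  have h2 := mp'.quasiMeasurePreserving.ae h1
  filter_upwards [h2] with x hx
  have := rfi_eq (rft f) (WithLp.toLp 2 x)
  simp only [rft_eq] at this
  simpa [this] using hx

/-! ### Khintchine's inequality and `1 ≤ 𝔠` -/

theorem rademacher_zero_left {t : ℝ} (h0 : 0 ≤ t) (h1 : t < 1/2) : rademacher 0 t = 1 := by
  have : ⌊t * 2 ^ (0 + 1)⌋ = 0 := by
    rw [Int.floor_eq_iff]; norm_num; constructor <;> linarith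
  unfold rademacher; rw [this]; simp

theorem rademacher_zero_right {t : ℝ} (h0 : 1/2 ≤ t) (h1 : t < 1) : rademacher 0 t = -1 := by
  have : ⌊t * 2 ^ (0 + 1)⌋ = 1 := by
    rw [Int.floor_eq_iff]; norm_num; constructor <;> linarith
  unfold rademacher; rw [this]; simp

theorem rademacher_succ (j : ℕ) (t : ℝ) : rademacher (j + 1) t = rademacher j (2 * t) := by
  unfold rademacher; congr 2; ring

theorem rademacher_sub_one (j : ℕ) (t : ℝ) : rademacher j (t - 1) = rademacher j t := by
  unfold rademacher
  have : ⌊(t - 1) * 2 ^ (j + 1)⌋ = ⌊t * 2 ^ (j + 1)⌋ - 2 ^ (j + 1) := by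
    rw [← Int.floor_sub_intCast]; congr 1; push_cast; ring
  rw [this, zpow_sub₀ (by norm_num)]
  have e : Even ((2 : ℤ) ^ (j + 1)) := by rw [pow_succ]; exact even_two.mul_left _
  rw [e.neg_one_zpow, div_one]

theorem abs_rademacher (j : ℕ) (t : ℝ) : |rademacher j t| = 1 := by
  unfold rademacher; rw [abs_zpow]; simp

theorem measurable_rademacher (j : ℕ) : Measurable (rademacher j) := by
  unfold rademacher
  have h : Measurable fun k : ℤ => (-1 : ℝ) ^ k := measurable_from_top
  exact h.comp ((measurable_id.mul_const _).floor)

theorem rad_integrable {Φ : ℝ → ℝ} (hΦ : Continuous Φ) (N : ℕ) (α : Fin N → ℝ) (c a b : ℝ) :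
    IntervalIntegrable (fun t => Φ (c + ∑ j, α j * rademacher j t)) volume a b := by
  have hm : Measurable fun t => Φ (c + ∑ j, α j * rademacher j t) := by
    refine hΦ.measurable.comp (measurable_const.add ?_)
    exact Finset.measurable_sum _ fun j _ => (measurable_rademacher j).const_mul _
  obtain ⟨C, hC⟩ := (isCompact_closedBall (0:ℝ) (|c| + ∑ j, |α j|)).exists_bound_of_continuousOn
    hΦ.continuousOn
  rw [intervalIntegrable_iff]
  refine Measure.integrableOn_of_bounded (M := C) (by simp) hm.aestronglyMeasurable ?_
  refine Eventually.of_forall fun t => hC _ ?_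
  rw [mem_closedBall_zero_iff, Real.norm_eq_abs]
  refine (abs_add_le _ _).trans (add_le_add le_rfl ?_)
  refine (Finset.abs_sum_le_sum_abs _ _).trans (Finset.sum_le_sum fun j _ => ?_)
  rw [abs_mul, abs_rademacher, mul_one]

/-- Conditioning on the first Rademacher sign: on `[0, 1/2)` and `[1/2, 1)` the first function is `±1`,
and the remaining ones, rescaled to `[0, 1]`, are again the Rademacher system. The offset `c` is what
makes induction on `N` possible. -/
theorem rad_rec {Φ : ℝ → ℝ} (hΦ : Continuous Φ) (N : ℕ) (α : Fin (N + 1) → ℝ) (c : ℝ) :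
    ∫ t in (0:ℝ)..1, Φ (c + ∑ j, α j * rademacher j t) =
      ((∫ t in (0:ℝ)..1, Φ ((c + α 0) + ∑ j : Fin N, α j.succ * rademacher j t)) +
       (∫ t in (0:ℝ)..1, Φ ((c - α 0) + ∑ j : Fin N, α j.succ * rademacher j t))) / 2 := by
  rw [← intervalIntegral.integral_add_adjacent_intervals
    (rad_integrable hΦ _ α c 0 (1/2)) (rad_integrable hΦ _ α c (1/2) 1)]
  have hne : ∀ x : ℝ, ∀ᵐ t : ℝ, t ≠ x := fun x => by simp [ae_iff]
  have l : ∫ t in (0:ℝ)..(1/2), Φ (c + ∑ j, α j * rademacher j t) =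
      ∫ t in (0:ℝ)..(1/2), Φ ((c + α 0) + ∑ j : Fin N, α j.succ * rademacher j (2 * t)) := by
    apply intervalIntegral.integral_congr_ae
    filter_upwards [hne (1/2)] with t ht h
    rw [Set.uIoc_of_le (by norm_num)] at h
    rw [Fin.sum_univ_succ]
    simp only [Fin.val_zero, Fin.val_succ, rademacher_succ,
      rademacher_zero_left h.1.le (lt_of_le_of_ne h.2 ht)]
    congr 1; ring
  have r : ∫ t in (1/2:ℝ)..1, Φ (c + ∑ j, α j * rademacher j t) =
      ∫ t in (1/2:ℝ)..1, Φ ((c - α 0) + ∑ j : Fin N, α j.succ * rademacher j (2 * t - 1)) := by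
    apply intervalIntegral.integral_congr_ae
    filter_upwards [hne 1] with t ht h
    rw [Set.uIoc_of_le (by norm_num)] at h
    rw [Fin.sum_univ_succ]
    simp only [Fin.val_zero, Fin.val_succ, rademacher_succ, rademacher_sub_one,
      rademacher_zero_right h.1.le (lt_of_le_of_ne h.2 ht)]
    congr 1; ring
  rw [l, r, intervalIntegral.integral_comp_mul_left
    (fun t => Φ ((c + α 0) + ∑ j : Fin N, α j.succ * rademacher j t)) (by norm_num : (2:ℝ) ≠ 0),
    intervalIntegral.integral_comp_mul_sub
    (fun t => Φ ((c - α 0) + ∑ j : Fin N, α j.succ * rademacher j t)) (by norm_num : (2:ℝ) ≠ 0)]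
  norm_num
  ring

theorem rad_sq (N : ℕ) (α : Fin N → ℝ) (c : ℝ) :
    ∫ t in (0:ℝ)..1, (c + ∑ j, α j * rademacher j t) ^ 2 = c ^ 2 + ∑ j, α j ^ 2 := by
  induction N generalizing c with
  | zero => simp
  | succ N ih =>
    rw [rad_rec (Φ := fun x => x ^ 2) (by fun_prop), ih (fun j => α j.succ),
      ih (fun j => α j.succ), Fin.sum_univ_succ]
    ring

/-- Fourth moment bound, the input for the lower Khintchine inequality. -/
theorem rad_four (N : ℕ) (α : Fin N → ℝ) (c : ℝ) :
    ∫ t in (0:ℝ)..1, (c + ∑ j, α j * rademacher j t) ^ 4 ≤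
      c ^ 4 + 6 * c ^ 2 * (∑ j, α j ^ 2) + 3 * (∑ j, α j ^ 2) ^ 2 := by
  induction N generalizing c with
  | zero => simp
  | succ N ih =>
    rw [rad_rec (Φ := fun x => x ^ 4) (by fun_prop), Fin.sum_univ_succ]
    have h1 := ih (fun j => α j.succ) (c + α 0)
    have h2 := ih (fun j => α j.succ) (c - α 0)
    nlinarith [sq_nonneg (α 0 ^ 2)]

/-- Subgaussian bound for the exponential moments, from `cosh x ≤ exp (x² / 2)`. -/
theorem rad_exp (N : ℕ) (α : Fin N → ℝ) (a c : ℝ) :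
    ∫ t in (0:ℝ)..1, Real.exp (a * (c + ∑ j, α j * rademacher j t)) ≤
      Real.exp (a * c + a ^ 2 * (∑ j, α j ^ 2) / 2) := by
  induction N generalizing c with
  | zero => simp
  | succ N ih =>
    rw [rad_rec (Φ := fun x => Real.exp (a * x)) (by fun_prop), Fin.sum_univ_succ]
    have h1 := ih (fun j => α j.succ) (c + α 0)
    have h2 := ih (fun j => α j.succ) (c - α 0)
    have h3 := Real.cosh_le_exp_half_sq (a * α 0)
    set σ := ∑ j : Fin N, α j.succ ^ 2
    have e1 : Real.exp (a * (c + α 0) + a ^ 2 * σ / 2) =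
        Real.exp (a * c + a ^ 2 * σ / 2) * Real.exp (a * α 0) := by
      rw [← Real.exp_add]; congr 1; ring
    have e2 : Real.exp (a * (c - α 0) + a ^ 2 * σ / 2) =
        Real.exp (a * c + a ^ 2 * σ / 2) * Real.exp (-(a * α 0)) := by
      rw [← Real.exp_add]; congr 1; ring
    have e3 : Real.exp (a * c + a ^ 2 * (α 0 ^ 2 + σ) / 2) =
        Real.exp (a * c + a ^ 2 * σ / 2) * Real.exp ((a * α 0) ^ 2 / 2) := by
      rw [← Real.exp_add]; congr 1; ring
    rw [e1] at h1; rw [e2] at h2; rw [e3]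
    rw [Real.cosh_eq] at h3
    have h4 := mul_le_mul_of_nonneg_left h3 (Real.exp_pos (a * c + a ^ 2 * σ / 2)).le
    linarith

theorem rad_zero_case {q : ℝ} (hq : 0 < q) {N : ℕ} {α : Fin N → ℝ} (h : ∑ j, α j ^ 2 = 0) :
    (∫ t in (0:ℝ)..1, |∑ j, α j * rademacher j t| ^ q) ^ (1/q) = 0 := by
  have h0 : ∀ j, α j = 0 := fun j => by
    have := (Finset.sum_eq_zero_iff_of_nonneg (fun j _ => sq_nonneg (α j))).1 h j (Finset.mem_univ _)
    exact pow_eq_zero_iff (two_ne_zero) |>.1 this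
  simp [h0, Real.zero_rpow hq.ne', Real.zero_rpow (inv_pos.2 hq).ne']

/-- Upper Khintchine inequality with a non-optimal constant: after normalising `∑ α_j² = 1`, the power
`|y| ^ q` is dominated by `1 + n! (e^y + e^{-y})` with `n ≥ q`, and `rad_exp` applies. -/
theorem khin_upper {q : ℝ} (hq : 1 ≤ q) : ∃ B : ℝ, 0 ≤ B ∧ ∀ (N : ℕ) (α : Fin N → ℝ),
    (∫ t in (0:ℝ)..1, |∑ j, α j * rademacher j t| ^ q) ^ (1/q) ≤
      B * (∑ j, α j ^ 2) ^ (1/2 : ℝ) := by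
  have hq0 : 0 < q := by linarith
  obtain ⟨n, hn⟩ := exists_nat_ge q
  set F : ℝ := (n.factorial : ℝ) with hF
  have hFpos : 0 < F := by positivity
  set K : ℝ := 1 + 2 * F * Real.exp (1/2) with hK
  have hKpos : 0 < K := by positivity
  have pt : ∀ y : ℝ, |y| ^ q ≤ 1 + F * (Real.exp y + Real.exp (-y)) := by
    intro y
    rcases le_total |y| 1 with h | h
    · have : |y| ^ q ≤ 1 := Real.rpow_le_one (abs_nonneg _) h hq0.le
      have : 0 < F * (Real.exp y + Real.exp (-y)) := by positivity
      linarith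
    · have h1 : |y| ^ q ≤ |y| ^ n := by
        rw [← Real.rpow_natCast]; exact Real.rpow_le_rpow_of_exponent_le h hn
      have h2 := Real.pow_div_factorial_le_exp |y| (abs_nonneg y) n
      rw [div_le_iff₀ hFpos] at h2
      have h3 : Real.exp |y| ≤ Real.exp y + Real.exp (-y) := by
        rcases abs_cases y with ⟨h, _⟩ | ⟨h, _⟩ <;> rw [h] <;>
          linarith [Real.exp_pos y, Real.exp_pos (-y)]
      nlinarith
  refine ⟨K ^ (1/q), by positivity, fun N α => ?_⟩
  rcases (Finset.sum_nonneg fun j _ => sq_nonneg (α j) : 0 ≤ ∑ j, α j ^ 2).eq_or_lt with h | h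
  · rw [rad_zero_case hq0 h.symm]
    rw [← h, Real.zero_rpow (by norm_num), mul_zero]
  set σ := ∑ j, α j ^ 2 with hσ
  set s := σ ^ (1/2 : ℝ) with hs
  have hspos : 0 < s := by positivity
  have hs2 : s ^ 2 = σ := by
    rw [hs, ← Real.rpow_natCast, ← Real.rpow_mul h.le]; norm_num
  have cont : Continuous fun x : ℝ => |x| ^ q :=
    continuous_abs.rpow_const fun _ => Or.inr hq0.le
  have i0 := rad_integrable cont N α 0 0 1
  have i1 := rad_integrable (Φ := fun x => Real.exp (s⁻¹ * x)) (by fun_prop) N α 0 0 1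
  have i2 := rad_integrable (Φ := fun x => Real.exp (-s⁻¹ * x)) (by fun_prop) N α 0 0 1
  have e1 := rad_exp N α (s⁻¹) 0
  have e2 := rad_exp N α (-s⁻¹) 0
  have hh : s⁻¹ ^ 2 * σ = 1 := by rw [← hs2]; field_simp
  rw [neg_sq] at e2
  rw [← hσ, hh] at e1 e2
  simp only [zero_add, mul_zero] at i0 i1 i2 e1 e2
  have main : ∫ t in (0:ℝ)..1, |∑ j, α j * rademacher j t| ^ q ≤ s ^ q * K := by
    have := intervalIntegral.integral_mono_on (zero_le_one (α := ℝ)) i0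
      (((intervalIntegrable_const (c := (1:ℝ))).add ((i1.add i2).const_mul F)).const_mul (s ^ q))
      (fun t _ => by
        -- `s⁻¹` normalises the coefficients to have unit `ℓ²` norm.
        have := pt (s⁻¹ * ∑ j, α j * rademacher j t)
        rw [abs_mul, Real.mul_rpow (abs_nonneg _) (abs_nonneg _), abs_of_pos (inv_pos.2 hspos),
          Real.inv_rpow hspos.le, inv_mul_le_iff₀ (by positivity)] at this
        simpa only [neg_mul] using this)
    refine this.trans ?_
    rw [intervalIntegral.integral_const_mul]
    refine mul_le_mul_of_nonneg_left ?_ (by positivity)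
    rw [intervalIntegral.integral_add (by simp) ((i1.add i2).const_mul F),
      intervalIntegral.integral_const_mul, intervalIntegral.integral_add i1 i2]
    simp only [intervalIntegral.integral_const, sub_zero, one_smul]
    rw [hK]
    nlinarith
  calc _ ≤ (s ^ q * K) ^ (1/q) := by
        refine Real.rpow_le_rpow ?_ main (by positivity)
        exact intervalIntegral.integral_nonneg zero_le_one fun t _ => by positivity
    _ = _ := by
        rw [Real.mul_rpow (by positivity) hKpos.le, ← Real.rpow_mul hspos.le,
          mul_one_div_cancel hq0.ne', Real.rpow_one, mul_comm]

/-- Lower Khintchine inequality with a non-optimal constant: after normalising `∑ α_j² = 1`, integrate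
`y² ≤ 6 |y| ^ p + y⁴ / 6` and use that the second moment is `1` and the fourth is at most `3`. -/
theorem khin_lower {p : ℝ} (hp : 0 < p) (hp1 : p < 1) (N : ℕ) (α : Fin N → ℝ) :
    (1/12 : ℝ) ^ (1/p) * (∑ j, α j ^ 2) ^ (1/2 : ℝ) ≤
      (∫ t in (0:ℝ)..1, |∑ j, α j * rademacher j t| ^ p) ^ (1/p) := by
  have pt : ∀ y : ℝ, y ^ 2 ≤ 6 * |y| ^ p + y ^ 4 / 6 := by
    intro y
    have hnn : 0 ≤ |y| ^ p := by positivity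
    rcases le_total (y ^ 2) 6 with h | h
    · rcases le_total |y| 1 with h1 | h1
      · have : y ^ 2 ≤ |y| ^ p := by
          rw [← sq_abs, ← Real.rpow_natCast]
          rcases (abs_nonneg y).eq_or_lt with h0 | h0
          · rw [← h0, Real.zero_rpow hp.ne']; norm_num
          · exact Real.rpow_le_rpow_of_exponent_ge h0 h1 (by norm_num; linarith)
        nlinarith [sq_nonneg (y ^ 2)]
      · have : 1 ≤ |y| ^ p := Real.one_le_rpow h1 hp.le
        nlinarith [sq_nonneg (y ^ 2)]
    · nlinarith
  rcases (Finset.sum_nonneg fun j _ => sq_nonneg (α j) : 0 ≤ ∑ j, α j ^ 2).eq_or_lt with h | h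
  · rw [rad_zero_case hp h.symm]
    rw [← h, Real.zero_rpow (by norm_num), mul_zero]
  set σ := ∑ j, α j ^ 2 with hσ
  set s := σ ^ (1/2 : ℝ) with hs
  have hspos : 0 < s := by positivity
  have hs2 : s ^ 2 = σ := by
    rw [hs, ← Real.rpow_natCast, ← Real.rpow_mul h.le]; norm_num
  have cont : Continuous fun x : ℝ => |x| ^ p :=
    continuous_abs.rpow_const fun _ => Or.inr hp.le
  have i0 := rad_integrable cont N α 0 0 1
  have i2 := rad_integrable (Φ := fun x => x ^ 2) (by fun_prop) N α 0 0 1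
  have i4 := rad_integrable (Φ := fun x => x ^ 4) (by fun_prop) N α 0 0 1
  have e2 := rad_sq N α 0
  have e4 := rad_four N α 0
  rw [← hσ, ← hs2] at e2 e4
  simp only [zero_add, mul_zero, zero_mul, ne_eq, OfNat.ofNat_ne_zero, not_false_eq_true,
    zero_pow] at i0 i2 i4 e2 e4
  have main : s ^ p * (1/12) ≤ ∫ t in (0:ℝ)..1, |∑ j, α j * rademacher j t| ^ p := by
    have := intervalIntegral.integral_mono_on (zero_le_one (α := ℝ)) i2
      ((i0.const_mul (6 * s ^ 2 * (s ^ p)⁻¹)).add (i4.const_mul ((6 * s ^ 2)⁻¹)))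
      (fun t _ => by
        have := pt (s⁻¹ * ∑ j, α j * rademacher j t)
        rw [abs_mul, Real.mul_rpow (abs_nonneg _) (abs_nonneg _), abs_of_pos (inv_pos.2 hspos),
          Real.inv_rpow hspos.le] at this
        have := mul_le_mul_of_nonneg_left this (sq_nonneg s)
        set X := ∑ j, α j * rademacher j t
        have hl : s ^ 2 * (s⁻¹ * X) ^ 2 = X ^ 2 := by field_simp
        have hr : s ^ 2 * (6 * ((s ^ p)⁻¹ * |X| ^ p) + (s⁻¹ * X) ^ 4 / 6) =
            6 * s ^ 2 * (s ^ p)⁻¹ * |X| ^ p + (6 * s ^ 2)⁻¹ * X ^ 4 := by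
          field_simp
        rw [hl, hr] at this
        exact this)
    rw [intervalIntegral.integral_add (i0.const_mul _) (i4.const_mul _),
      intervalIntegral.integral_const_mul, intervalIntegral.integral_const_mul, e2] at this
    set I := ∫ t in (0:ℝ)..1, |∑ j, α j * rademacher j t| ^ p
    set J := ∫ t in (0:ℝ)..1, (∑ j, α j * rademacher j t) ^ 4
    have h4 : (6 * s ^ 2)⁻¹ * J ≤ s ^ 2 / 2 := by
      rw [inv_mul_le_iff₀ (by positivity)]; nlinarith
    have h5 : s ^ 2 / 2 ≤ 6 * s ^ 2 * (s ^ p)⁻¹ * I := by linarith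
    have hsp : 0 < s ^ p := by positivity
    have h6 : 6 * s ^ 2 * (s ^ p)⁻¹ * I = s ^ 2 * (6 * (I / s ^ p)) := by field_simp
    rw [h6, div_eq_mul_inv] at h5
    have h7 := le_of_mul_le_mul_left h5 (by positivity)
    have h8 : 1/12 ≤ I / s ^ p := by linarith
    rw [le_div_iff₀ hsp] at h8
    linarith
  calc _ = (s ^ p * (1/12)) ^ (1/p) := by
        rw [Real.mul_rpow (by positivity) (by norm_num), ← Real.rpow_mul hspos.le,
          mul_one_div_cancel hp.ne', Real.rpow_one, mul_comm]
    _ ≤ _ := Real.rpow_le_rpow (by positivity) main (by positivity)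

theorem rad_single (q : ℝ) :
    (∫ t in (0:ℝ)..1, |∑ j : Fin 1, (1:ℝ) * rademacher j t| ^ q) ^ (1/q) = 1 := by
  simp [abs_rademacher]

theorem one_le_khintchineB {q : ℝ} (hq : 1 ≤ q) : 1 ≤ khintchineB q := by
  refine le_csInf (khin_upper hq) ?_
  rintro B ⟨_, hB⟩
  have := hB 1 (fun _ => 1)
  rw [rad_single] at this
  simpa using this

theorem khintchineA_pos_le {p : ℝ} (hp : 0 < p) (hp1 : p < 1) :
    0 < khintchineA p ∧ khintchineA p ≤ 1 := by
  have hb : ∀ A ∈ {A : ℝ | 0 ≤ A ∧ ∀ (N : ℕ) (α : Fin N → ℝ),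
    A * (∑ j, α j ^ 2) ^ (1/2 : ℝ) ≤
      (∫ t in (0:ℝ)..1, |∑ j, α j * rademacher j t| ^ p) ^ (1/p)}, A ≤ 1 := by
    rintro A ⟨_, hA⟩
    have := hA 1 (fun _ => 1)
    rw [rad_single] at this
    simpa using this
  have hmem : (1/12 : ℝ) ^ (1/p) ∈ {A : ℝ | 0 ≤ A ∧ ∀ (N : ℕ) (α : Fin N → ℝ),
    A * (∑ j, α j ^ 2) ^ (1/2 : ℝ) ≤
      (∫ t in (0:ℝ)..1, |∑ j, α j * rademacher j t| ^ p) ^ (1/p)} :=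
    ⟨by positivity, khin_lower hp hp1⟩
  exact ⟨lt_of_lt_of_le (by positivity) (le_csSup ⟨1, hb⟩ hmem), csSup_le ⟨_, hmem⟩ hb⟩

theorem one_le_cc {p p₁ p₂ : ℝ} (h1 : 1 ≤ p₁) (h2 : 1 ≤ p₂) (hp : 0 < p) : 1 ≤ cc p p₁ p₂ := by
  unfold cc
  split_ifs with h
  · obtain ⟨a0, a1⟩ := khintchineA_pos_le hp h
    rw [one_le_div (by positivity)]
    nlinarith [one_le_khintchineB h1, one_le_khintchineB h2]
  · exact le_rfl

/-! ### Continuity of the bilinear operator and linear changes of variables -/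

theorem continuous_rft {ι : Type} [Fintype ι] {f : (ι → ℝ) → ℂ} (hf : Integrable f) :
    Continuous (rft f) := by
  unfold rft
  refine continuous_of_dominated (bound := fun x => ‖f x‖) (fun ξ => ?_) (fun ξ => ?_) hf.norm ?_
  · refine AEStronglyMeasurable.mul (Continuous.aestronglyMeasurable ?_) hf.1
    exact Complex.continuous_conj.comp (continuous_rch.comp (by fun_prop : Continuous fun x => (ξ, x)))
  · refine Eventually.of_forall fun x => ?_
    rw [norm_mul, RCLike.norm_conj, norm_rch, one_mul]
  · refine Eventually.of_forall fun x => Continuous.mul ?_ continuous_const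
    exact Complex.continuous_conj.comp (continuous_rch.comp (by fun_prop : Continuous fun ξ => (ξ, x)))

theorem rft_congr_ae {ι : Type} [Fintype ι] {f f' : (ι → ℝ) → ℂ} (h : f =ᵐ[volume] f') :
    rft f = rft f' := by
  ext ξ
  exact integral_congr_ae (h.mono fun x hx => by simp only [hx])

/-- The operator with the character `rch (ξ + η)` split between the two integrals. -/
theorem rBm_eq {ι : Type} [Fintype ι] (m : (ι → ℝ) → (ι → ℝ) → ℂ)
    (f g : (ι → ℝ) → ℂ) (x : ι → ℝ) :
    rBm m f g x = ∫ ξ, (rft f ξ * rch ξ x) * ∫ η, rft g η * m ξ η * rch η x := by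
  unfold rBm
  congr 1; ext ξ
  rw [← integral_const_mul]
  congr 1; ext η
  rw [rch_add]; ring

theorem continuous_inner_aux {P : Type*} [TopologicalSpace P] [FirstCountableTopology P]
    {ι : Type} [Fintype ι] {G : (ι → ℝ) → ℂ} (hG : Integrable G)
    {M : P → (ι → ℝ) → (ι → ℝ) → ℂ}
    (hM : Continuous fun z : P × (ι → ℝ) × (ι → ℝ) => M z.1 z.2.1 z.2.2)
    {Cm : ℝ} (hb : ∀ p ξ η, ‖M p ξ η‖ ≤ Cm) :
    Continuous fun z : P × (ι → ℝ) × (ι → ℝ) => ∫ η, G η * M z.1 z.2.1 η * rch η z.2.2 := by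
  refine continuous_of_dominated (bound := fun η => ‖G η‖ * Cm) (fun z => ?_) (fun z => ?_)
    (hG.norm.mul_const _) ?_
  · refine (hG.1.mul (Continuous.aestronglyMeasurable ?_)).mul
      (Continuous.aestronglyMeasurable ?_)
    · exact hM.comp (by fun_prop : Continuous fun η => (z.1, z.2.1, η))
    · exact continuous_rch.comp (by fun_prop : Continuous fun η => (η, z.2.2))
  · refine Eventually.of_forall fun η => ?_
    rw [norm_mul, norm_mul, norm_rch, mul_one]
    exact mul_le_mul_of_nonneg_left (hb _ _ _) (norm_nonneg _)
  · refine Eventually.of_forall fun η => (continuous_const.mul ?_).mul ?_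
    · exact hM.comp (by fun_prop : Continuous fun z : P × (ι → ℝ) × (ι → ℝ) => (z.1, z.2.1, η))
    · exact continuous_rch.comp
        (by fun_prop : Continuous fun z : P × (ι → ℝ) × (ι → ℝ) => (η, z.2.2))

theorem norm_inner_le {ι : Type} [Fintype ι] {G : (ι → ℝ) → ℂ} (hG : Integrable G)
    {h : (ι → ℝ) → ℂ} {Cm : ℝ} (hb : ∀ η, ‖h η‖ ≤ Cm) (x : ι → ℝ) :
    ‖∫ η, G η * h η * rch η x‖ ≤ ∫ η, ‖G η‖ * Cm := by
  refine norm_integral_le_of_norm_le (hG.norm.mul_const _) (Eventually.of_forall fun η => ?_)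
  rw [norm_mul, norm_mul, norm_rch, mul_one]
  exact mul_le_mul_of_nonneg_left (hb _) (norm_nonneg _)

/-- If `M` depends continuously on a parameter, then `rBm` is jointly continuous in the parameter and
the space variable. -/
theorem continuous_rBm {P : Type*} [TopologicalSpace P] [FirstCountableTopology P]
    {ι : Type} [Fintype ι] {f g : (ι → ℝ) → ℂ} (hf : rSL1 f) (hg : rSL1 g)
    {M : P → (ι → ℝ) → (ι → ℝ) → ℂ}
    (hM : Continuous fun z : P × (ι → ℝ) × (ι → ℝ) => M z.1 z.2.1 z.2.2)
    {Cm : ℝ} (hb : ∀ p ξ η, ‖M p ξ η‖ ≤ Cm) :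
    Continuous fun z : P × (ι → ℝ) => rBm (M z.1) f g z.2 := by
  simp_rw [rBm_eq]
  have hK := continuous_inner_aux hg.2 hM hb
  refine continuous_of_dominated (bound := fun ξ => ‖rft f ξ‖ * ∫ η, ‖rft g η‖ * Cm)
    (fun z => ?_) (fun z => ?_) (hf.2.norm.mul_const _) ?_
  · refine (hf.2.1.mul (Continuous.aestronglyMeasurable ?_)).mul
      (Continuous.aestronglyMeasurable ?_)
    · exact continuous_rch.comp (by fun_prop : Continuous fun η => (η, z.2))
    · exact hK.comp (by fun_prop : Continuous fun ξ => (z.1, ξ, z.2))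
  · refine Eventually.of_forall fun ξ => ?_
    rw [norm_mul, norm_mul, norm_rch, mul_one]
    exact mul_le_mul_of_nonneg_left (norm_inner_le hg.2 (hb _ _) _) (norm_nonneg _)
  · refine Eventually.of_forall fun ξ => (continuous_const.mul ?_).mul ?_
    · exact continuous_rch.comp
        (by fun_prop : Continuous fun z : P × (ι → ℝ) => (ξ, z.2))
    · exact hK.comp (by fun_prop : Continuous fun z : P × (ι → ℝ) => (z.1, ξ, z.2))

/-- `C` is an admissible constant for the multiplier `m`: the set of all such `C` is the one whose
infimum defines `rBMnorm`. -/
def BMB (ι : Type) [Fintype ι] (p₁ p₂ p : ℝ) (m : (ι → ℝ) → (ι → ℝ) → ℂ) (C : ℝ≥0∞) : Prop :=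
  ∀ f g : (ι → ℝ) → ℂ, rSL1 f → rSL1 g →
    eLpNorm (rBm m f g) (ENNReal.ofReal p) volume ≤
      C * eLpNorm f (ENNReal.ofReal p₁) volume * eLpNorm g (ENNReal.ofReal p₂) volume

/-- Change of variables `x = e u` on the space side and `ξ = e' ω` on the frequency side, where `e` and
`e'` are dual to each other for the pairing `ξ · x` and scale Lebesgue measure by `c` and `c⁻¹`. By
`1/p₁ + 1/p₂ = 1/p` the powers of `c` on the two sides of the estimate are equal. -/
theorem BMB_transfer {ι κ : Type} [Fintype ι] [Fintype κ] {p p₁ p₂ : ℝ}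
    (h1 : 0 < p₁) (h2 : 0 < p₂) (hp : 0 < p) (hrel : 1/p₁ + 1/p₂ = 1/p)
    (e e' : (κ → ℝ) ≃ᵐ (ι → ℝ)) (c : ℝ≥0∞) (hc : c ≠ 0) (hc' : c ≠ ⊤)
    (he : Measure.map e volume = c • volume) (he' : Measure.map e' volume = c⁻¹ • volume)
    (hadd : ∀ ω θ, e' (ω + θ) = e' ω + e' θ) (hch : ∀ ω u, rch (e' ω) (e u) = rch ω u)
    {M : (ι → ℝ) → (ι → ℝ) → ℂ} {C : ℝ≥0∞}
    (H : BMB κ p₁ p₂ p (fun ω θ => M (e' ω) (e' θ)) C) : BMB ι p₁ p₂ p M C := by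
  have hc0 : c.toReal ≠ 0 := (ENNReal.toReal_pos hc hc').ne'
  have rftc : ∀ f : (ι → ℝ) → ℂ, ∀ ω, rft (f ∘ e) ω = c.toReal • rft f (e' ω) := by
    intro f ω
    unfold rft
    rw [← integral_smul_measure, ← he, integral_map_equiv]
    simp [hch]
  have sl : ∀ f : (ι → ℝ) → ℂ, rSL1 f → rSL1 (f ∘ e) := by
    intro f hf
    refine ⟨?_, ?_⟩
    · rw [← integrable_map_equiv, he]
      exact hf.1.smul_measure hc'
    · have : Integrable (rft f ∘ e') := by
        rw [← integrable_map_equiv, he']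
        exact hf.2.smul_measure (by simpa using hc)
      exact (this.smul c.toReal).congr (Eventually.of_forall fun ω => (rftc f ω).symm)
  have cv : ∀ h : (ι → ℝ) → ℂ, ∫ ω, h (e' ω) = c.toReal⁻¹ • ∫ ξ, h ξ := by
    intro h
    rw [← integral_map_equiv e' h, he', integral_smul_measure, ENNReal.toReal_inv]
  have op : ∀ f g : (ι → ℝ) → ℂ,
      rBm (fun ω θ => M (e' ω) (e' θ)) (f ∘ e) (g ∘ e) = rBm M f g ∘ e := by
    intro f g
    ext u
    simp only [Function.comp, rBm]
    have h1 := cv (fun ξ => ∫ η, rft f ξ * rft g η * M ξ η * rch (ξ + η) (e u))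
    have h2 := fun ξ => cv (fun η => rft f ξ * rft g η * M ξ η * rch (ξ + η) (e u))
    rw [eq_comm, inv_smul_eq_iff₀ hc0] at h1
    rw [h1, ← integral_smul]
    congr 1; ext ω
    have h3 := h2 (e' ω)
    rw [eq_comm, inv_smul_eq_iff₀ hc0] at h3
    rw [h3, ← integral_smul, ← integral_smul]
    congr 1; ext θ
    rw [rftc f ω, rftc g θ, ← hadd, hch]
    simp only [Complex.real_smul]
    ring
  have nm : ∀ (q : ℝ), 0 < q → ∀ h : (ι → ℝ) → ℂ,
      eLpNorm (h ∘ e) (ENNReal.ofReal q) volume =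
        c ^ (1/q) * eLpNorm h (ENNReal.ofReal q) volume := by
    intro q hq h
    rw [← e.measurableEmbedding.eLpNorm_map_measure, he,
      eLpNorm_smul_measure_of_ne_zero hc, smul_eq_mul]
    simp [ENNReal.toReal_ofReal hq.le]
  intro f g hf hg
  have := H (f ∘ e) (g ∘ e) (sl f hf) (sl g hg)
  rw [op, nm p hp, nm p₁ h1, nm p₂ h2, ← hrel, ENNReal.rpow_add _ _ hc hc'] at this
  have k0 : c ^ (1/p₁) * c ^ (1/p₂) ≠ 0 := by
    refine mul_ne_zero ?_ ?_ <;> simp [ENNReal.rpow_eq_zero_iff, hc, hc']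
  have k1 : c ^ (1/p₁) * c ^ (1/p₂) ≠ ⊤ := by
    refine ENNReal.mul_ne_top ?_ ?_ <;> simp [ENNReal.rpow_eq_top_iff, hc, hc']
  rw [← ENNReal.mul_le_mul_iff_right k0 k1]
  refine this.trans (le_of_eq ?_)
  ring

/-! ### Multipliers depending on the first group of variables -/

/-- `(s, x') ↦ Sum.elim s x'` as a measurable equivalence. -/
def sumE (ι κ : Type) [Fintype ι] [Fintype κ] : ((ι → ℝ) × (κ → ℝ)) ≃ᵐ (ι ⊕ κ → ℝ) :=
  (MeasurableEquiv.sumPiEquivProdPi fun _ : ι ⊕ κ => ℝ).symm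

theorem sumE_apply {ι κ : Type} [Fintype ι] [Fintype κ] (z : (ι → ℝ) × (κ → ℝ)) :
    sumE ι κ z = Sum.elim z.1 z.2 := by
  ext i; cases i <;> rfl

theorem sumE_mp (ι κ : Type) [Fintype ι] [Fintype κ] :
    MeasurePreserving (sumE ι κ) (volume.prod volume) volume :=
  volume_measurePreserving_sumPiEquivProdPi_symm (fun _ : ι ⊕ κ => ℝ)

theorem continuous_elim {ι κ : Type} :
    Continuous fun z : (ι → ℝ) × (κ → ℝ) => (Sum.elim z.1 z.2 : ι ⊕ κ → ℝ) := by
  refine continuous_pi fun i => ?_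
  cases i <;> simp <;> fun_prop

theorem rch_elim {ι κ : Type} [Fintype ι] [Fintype κ] (a s : ι → ℝ) (b t : κ → ℝ) :
    rch (Sum.elim a b : ι ⊕ κ → ℝ) (Sum.elim s t) = rch a s * rch b t := by
  unfold rch
  rw [← Complex.exp_add, Fintype.sum_sum_type]
  congr 1; simp; ring

theorem integrable_elim {ι κ : Type} [Fintype ι] [Fintype κ] {H : (ι ⊕ κ → ℝ) → ℂ}
    (hH : Integrable H) :
    Integrable (fun z : (ι → ℝ) × (κ → ℝ) => H (Sum.elim z.1 z.2)) (volume.prod volume) := by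
  have := ((sumE_mp ι κ).integrable_comp_emb (sumE ι κ).measurableEmbedding).2 hH
  simpa only [Function.comp_def, sumE_apply] using this

theorem integral_elim {ι κ : Type} [Fintype ι] [Fintype κ] {H : (ι ⊕ κ → ℝ) → ℂ}
    (hH : Integrable H) :
    ∫ ξ, H ξ = ∫ τ : ι → ℝ, ∫ ξ' : κ → ℝ, H (Sum.elim τ ξ') := by
  rw [← (sumE_mp ι κ).integral_comp (sumE ι κ).measurableEmbedding]
  simp only [sumE_apply]
  exact integral_prod _ (integrable_elim hH)

theorem lintegral_elim {ι κ : Type} [Fintype ι] [Fintype κ] {H : (ι ⊕ κ → ℝ) → ℝ≥0∞}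
    (hH : Measurable H) :
    ∫⁻ x, H x = ∫⁻ x' : κ → ℝ, ∫⁻ s : ι → ℝ, H (Sum.elim s x') := by
  rw [(sumE_mp ι κ).lintegral_map_equiv H]
  simp only [sumE_apply]
  exact lintegral_prod_symm _ (hH.comp (continuous_elim.measurable)).aemeasurable

/-- The Fourier transform of `f` in all variables, inverted in the second group of variables. -/
def pft {ι κ : Type} [Fintype ι] [Fintype κ] (f : (ι ⊕ κ → ℝ) → ℂ) (x' : κ → ℝ) (τ : ι → ℝ) : ℂ :=
  ∫ ξ' : κ → ℝ, rft f (Sum.elim τ ξ') * rch ξ' x'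

/-- Almost every slice `f(·, x')` of a function in `SL¹` is again in `SL¹`, and its Fourier transform is
the partial inversion `pft f x'`. This is Fubini together with Fourier inversion in the second group
of variables. -/
theorem slice {ι κ : Type} [Fintype ι] [Fintype κ] {f : (ι ⊕ κ → ℝ) → ℂ} (hf : rSL1 f)
    (hsm : StronglyMeasurable f) :
    ∀ᵐ x' : κ → ℝ, rSL1 (fun s : ι → ℝ => f (Sum.elim s x')) ∧
      ∀ᵐ τ : ι → ℝ, rft (fun s : ι → ℝ => f (Sum.elim s x')) τ = pft f x' τ := by
  have hfi := integrable_elim hf.1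
  have hFi := integrable_elim hf.2
  have hFc : Continuous (rft f) := continuous_rft hf.1
  set u : (ι → ℝ) → (κ → ℝ) → ℂ := fun τ x' => rft (fun s : ι → ℝ => f (Sum.elim s x')) τ with hu
  have hum : StronglyMeasurable fun z : (ι → ℝ) × (κ → ℝ) => u z.1 z.2 := by
    refine StronglyMeasurable.integral_prod_right
      (f := fun (z : (ι → ℝ) × (κ → ℝ)) (s : ι → ℝ) =>
        (starRingEnd ℂ) (rch z.1 s) * f (Sum.elim s z.2)) ?_
    refine StronglyMeasurable.mul (Continuous.stronglyMeasurable ?_) ?_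
    · exact Complex.continuous_conj.comp (continuous_rch.comp
        (by fun_prop : Continuous fun w : ((ι → ℝ) × (κ → ℝ)) × (ι → ℝ) => (w.1.1, w.2)))
    · exact hsm.comp_measurable (continuous_elim.comp
        (by fun_prop : Continuous fun w : ((ι → ℝ) × (κ → ℝ)) × (ι → ℝ) =>
          (w.2, w.1.2))).measurable
  have hvm : StronglyMeasurable fun z : (ι → ℝ) × (κ → ℝ) => pft f z.2 z.1 := by
    refine StronglyMeasurable.integral_prod_right
      (f := fun (z : (ι → ℝ) × (κ → ℝ)) (ξ' : κ → ℝ) =>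
        rft f (Sum.elim z.1 ξ') * rch ξ' z.2) ?_
    refine Continuous.stronglyMeasurable ?_
    refine (hFc.comp (continuous_elim.comp
        (by fun_prop : Continuous fun w : ((ι → ℝ) × (κ → ℝ)) × (κ → ℝ) =>
          (w.1.1, w.2)))).mul (continuous_rch.comp
        (by fun_prop : Continuous fun w : ((ι → ℝ) × (κ → ℝ)) × (κ → ℝ) => (w.2, w.1.2)))
  -- the integrand of the partial Fourier transform in the first variables
  have hwi : ∀ τ : ι → ℝ, Integrable (fun z : (ι → ℝ) × (κ → ℝ) =>
      (starRingEnd ℂ) (rch τ z.1) * f (Sum.elim z.1 z.2)) (volume.prod volume) := by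
    intro τ
    refine hfi.bdd_mul (c := 1) (Continuous.aestronglyMeasurable ?_)
      (Eventually.of_forall fun z => ?_)
    · exact Complex.continuous_conj.comp (continuous_rch.comp
        (by fun_prop : Continuous fun w : (ι → ℝ) × (κ → ℝ) => (τ, w.1)))
    · rw [RCLike.norm_conj, norm_rch]
  have hui : ∀ τ, Integrable (u τ) := fun τ => (hwi τ).integral_prod_right
  have huF : ∀ τ ξ', rft (u τ) ξ' = rft f (Sum.elim τ ξ') := by
    intro τ ξ'
    have h1 : rft f (Sum.elim τ ξ') = ∫ s : ι → ℝ, ∫ x' : κ → ℝ,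
        (starRingEnd ℂ) (rch ξ' x') * ((starRingEnd ℂ) (rch τ s) * f (Sum.elim s x')) := by
      unfold rft
      rw [integral_elim]
      · congr 1; ext s; congr 1; ext x'
        rw [rch_elim, map_mul]; ring
      · refine hf.1.bdd_mul (c := 1) (Continuous.aestronglyMeasurable ?_)
          (Eventually.of_forall fun z => ?_)
        · exact Complex.continuous_conj.comp (continuous_rch.comp
            (by fun_prop : Continuous fun w : ι ⊕ κ → ℝ => (Sum.elim τ ξ', w)))
        · rw [RCLike.norm_conj, norm_rch]
    rw [h1, integral_integral_swap]
    · unfold rft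
      congr 1; ext x'
      rw [integral_const_mul]
      rfl
    · refine (hwi τ).bdd_mul (c := 1) (Continuous.aestronglyMeasurable ?_)
          (Eventually.of_forall fun z => ?_)
      · exact Complex.continuous_conj.comp (continuous_rch.comp
            (by fun_prop : Continuous fun w : (ι → ℝ) × (κ → ℝ) => (ξ', w.2)))
      · rw [RCLike.norm_conj, norm_rch]
  -- Fourier inversion in the second variables, for almost every `τ`
  have hinv : ∀ᵐ τ : ι → ℝ, ∀ᵐ x' : κ → ℝ, u τ x' = pft f x' τ := by
    filter_upwards [hFi.prod_right_ae] with τ hτ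
    have hs : rSL1 (u τ) := ⟨hui τ, by
      refine hτ.congr (Eventually.of_forall fun ξ' => ?_)
      exact (huF τ ξ').symm⟩
    filter_upwards [ae_inv hs] with x' hx'
    rw [hx']
    simp only [huF]
    rfl
  have hinv' : ∀ᵐ x' : κ → ℝ, ∀ᵐ τ : ι → ℝ, u τ x' = pft f x' τ :=
    (Measure.ae_ae_comm (μ := volume) (ν := volume)
      (p := fun (τ : ι → ℝ) (x' : κ → ℝ) => u τ x' = pft f x' τ)
      (measurableSet_eq_fun hum.measurable hvm.measurable)).1 hinv
  have hpi : ∀ x' : κ → ℝ, Integrable (pft f x' : (ι → ℝ) → ℂ) := by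
    intro x'
    have : Integrable (fun z : (ι → ℝ) × (κ → ℝ) => rft f (Sum.elim z.1 z.2) * rch z.2 x')
        (volume.prod volume) := by
      refine hFi.mul_bdd (c := 1) (Continuous.aestronglyMeasurable ?_)
        (Eventually.of_forall fun z => (norm_rch _ _).le)
      exact continuous_rch.comp (by fun_prop : Continuous fun w : (ι → ℝ) × (κ → ℝ) => (w.2, x'))
    exact this.integral_prod_left
  filter_upwards [hinv', hfi.prod_left_ae] with x' h1 h2
  exact ⟨⟨h2, (hpi x').congr (h1.mono fun τ h => h.symm)⟩, h1⟩

/-- Integrating out the frequencies of the second group expresses the operator on the product through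
the partial inversions `pft`. -/
theorem rBm_slice {ι κ : Type} [Fintype ι] [Fintype κ] {f g : (ι ⊕ κ → ℝ) → ℂ} (hf : rSL1 f)
    (hg : rSL1 g) {m : (ι → ℝ) → (ι → ℝ) → ℂ}
    (hm : Continuous fun z : (ι → ℝ) × (ι → ℝ) => m z.1 z.2) {Cm : ℝ}
    (hb : ∀ ξ η, ‖m ξ η‖ ≤ Cm) (s : ι → ℝ) (x' : κ → ℝ) :
    rBm (fun ξ η : ι ⊕ κ → ℝ => m (ξ ∘ Sum.inl) (η ∘ Sum.inl)) f g (Sum.elim s x') =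
      ∫ τ : ι → ℝ, (pft f x' τ * rch τ s) * ∫ σ : ι → ℝ, pft g x' σ * m τ σ * rch σ s := by
  set x : ι ⊕ κ → ℝ := Sum.elim s x' with hx
  have hrc : Continuous fun η : ι ⊕ κ → ℝ => rch η x :=
    continuous_rch.comp (by fun_prop : Continuous fun η : ι ⊕ κ → ℝ => (η, x))
  set K : (ι → ℝ) → ℂ := fun τ =>
    ∫ η : ι ⊕ κ → ℝ, rft g η * m τ (η ∘ Sum.inl) * rch η x with hK
  have hKc : Continuous fun ξ : ι ⊕ κ → ℝ => K (ξ ∘ Sum.inl) := by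
    have hM : Continuous fun z : Unit × (ι ⊕ κ → ℝ) × (ι ⊕ κ → ℝ) =>
        m (z.2.1 ∘ Sum.inl) (z.2.2 ∘ Sum.inl) :=
      hm.comp (by fun_prop : Continuous fun z : Unit × (ι ⊕ κ → ℝ) × (ι ⊕ κ → ℝ) =>
        (z.2.1 ∘ Sum.inl, z.2.2 ∘ Sum.inl))
    have := continuous_inner_aux (P := Unit) (G := rft g)
      (M := fun _ ξ η => m (ξ ∘ Sum.inl) (η ∘ Sum.inl)) hg.2 hM (fun _ _ _ => hb _ _)
    exact this.comp (by fun_prop : Continuous fun ξ : ι ⊕ κ → ℝ => ((), ξ, x))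
  have hKe : ∀ τ, K τ = ∫ σ : ι → ℝ, pft g x' σ * m τ σ * rch σ s := by
    intro τ
    rw [hK]
    dsimp only
    rw [integral_elim]
    · congr 1; ext σ
      rw [pft, ← integral_mul_const, ← integral_mul_const]
      congr 1; ext η'
      rw [hx, rch_elim, Sum.elim_comp_inl]; ring
    · refine (hg.2.mul_bdd (c := Cm) (Continuous.aestronglyMeasurable ?_)
        (Eventually.of_forall fun z => hb _ _)).mul_bdd (c := 1) hrc.aestronglyMeasurable
        (Eventually.of_forall fun z => (norm_rch _ _).le)
      exact hm.comp (by fun_prop : Continuous fun η : ι ⊕ κ → ℝ => (τ, η ∘ Sum.inl))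
  have hKb : ∀ τ, ‖K τ‖ ≤ ∫ η, ‖rft g η‖ * Cm := fun τ =>
    norm_inner_le hg.2 (h := fun η => m τ (η ∘ Sum.inl)) (fun η => hb _ _) x
  rw [rBm_eq]
  change ∫ ξ, (rft f ξ * rch ξ x) * K (ξ ∘ Sum.inl) = _
  rw [integral_elim]
  · simp_rw [← hKe]
    congr 1; ext τ
    rw [pft, ← integral_mul_const, ← integral_mul_const]
    congr 1; ext ξ'
    rw [hx, rch_elim, Sum.elim_comp_inl]; ring
  · exact (hf.2.mul_bdd (c := 1) hrc.aestronglyMeasurable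
        (Eventually.of_forall fun z => (norm_rch _ _).le)).mul_bdd hKc.aestronglyMeasurable
        (Eventually.of_forall fun z => hKb _)

theorem eLpNorm_rpow_eq {α : Type*} [MeasurableSpace α] (μ : Measure α) (f : α → ℂ) {q : ℝ}
    (hq : 0 < q) : eLpNorm f (ENNReal.ofReal q) μ ^ q = ∫⁻ x, ‖f x‖ₑ ^ q ∂μ := by
  rw [eLpNorm_eq_lintegral_rpow_enorm_toReal (by simpa using hq) ENNReal.ofReal_ne_top,
    ENNReal.toReal_ofReal hq.le, ← ENNReal.rpow_mul, one_div_mul_cancel hq.ne', ENNReal.rpow_one]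

theorem measurable_slice_norm {ι κ : Type} [Fintype ι] [Fintype κ] {q : ℝ} (hq : 0 < q)
    {h : (ι ⊕ κ → ℝ) → ℂ} (hh : Measurable h) : Measurable fun x' : κ → ℝ =>
      eLpNorm (fun s : ι → ℝ => h (Sum.elim s x')) (ENNReal.ofReal q) volume := by
  simp only [eLpNorm_eq_lintegral_rpow_enorm_toReal (p := ENNReal.ofReal q)
    (by simpa using hq) ENNReal.ofReal_ne_top]
  refine Measurable.pow_const ?_ _
  refine Measurable.lintegral_prod_right' (f := fun z : (κ → ℝ) × (ι → ℝ) =>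
    ‖h (Sum.elim z.2 z.1)‖ₑ ^ (ENNReal.ofReal q).toReal) ?_
  refine Measurable.pow_const (Measurable.enorm (hh.comp ?_)) _
  exact (continuous_elim.comp
    (by fun_prop : Continuous fun z : (κ → ℝ) × (ι → ℝ) => (z.2, z.1))).measurable

/-- The `L^q` norm of the slice norms is the full `L^q` norm. -/
theorem lintegral_slice_norm {ι κ : Type} [Fintype ι] [Fintype κ] {q : ℝ} (hq : 0 < q)
    {h : (ι ⊕ κ → ℝ) → ℂ} (hh : Measurable h) :
    ∫⁻ x' : κ → ℝ, eLpNorm (fun s : ι → ℝ => h (Sum.elim s x')) (ENNReal.ofReal q) volume ^ q =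
      eLpNorm h (ENNReal.ofReal q) volume ^ q := by
  rw [eLpNorm_rpow_eq _ _ hq, lintegral_elim (hh.enorm.pow_const q)]
  congr 1; ext x'
  rw [eLpNorm_rpow_eq _ _ hq]

theorem holderConjugate_div {p p₁ p₂ : ℝ} (h1 : 0 < p₁) (h2 : 0 < p₂) (hp : 0 < p)
    (hrel : 1/p₁ + 1/p₂ = 1/p) : (p₁ / p).HolderConjugate (p₂ / p) := by
  rw [Real.holderConjugate_iff]
  have e1 : (p₁ / p)⁻¹ + (p₂ / p)⁻¹ = 1 := by
    rw [inv_div, inv_div]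
    have : p / p₁ + p / p₂ = p * (1/p₁ + 1/p₂) := by ring
    rw [this, hrel, mul_one_div_cancel hp.ne']
  refine ⟨?_, e1⟩
  have : 0 < (p₂ / p)⁻¹ := by positivity
  have h3 : (p₁ / p)⁻¹ < 1 := by linarith
  exact (inv_lt_one₀ (by positivity)).1 h3

theorem continuous_rBm_inl {ι κ : Type} [Fintype ι] [Fintype κ] {f g : (ι ⊕ κ → ℝ) → ℂ}
    (hf : rSL1 f) (hg : rSL1 g) {m : (ι → ℝ) → (ι → ℝ) → ℂ}
    (hm : Continuous fun z : (ι → ℝ) × (ι → ℝ) => m z.1 z.2) {Cm : ℝ}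
    (hb : ∀ ξ η, ‖m ξ η‖ ≤ Cm) :
    Continuous (rBm (fun ξ η : ι ⊕ κ → ℝ => m (ξ ∘ Sum.inl) (η ∘ Sum.inl)) f g) := by
  have hM : Continuous fun z : Unit × (ι ⊕ κ → ℝ) × (ι ⊕ κ → ℝ) =>
      m (z.2.1 ∘ Sum.inl) (z.2.2 ∘ Sum.inl) :=
    hm.comp (by fun_prop : Continuous fun z : Unit × (ι ⊕ κ → ℝ) × (ι ⊕ κ → ℝ) =>
      (z.2.1 ∘ Sum.inl, z.2.2 ∘ Sum.inl))
  have := continuous_rBm (P := Unit) (Cm := Cm) hf hg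
    (M := fun _ ξ η => m (ξ ∘ Sum.inl) (η ∘ Sum.inl)) hM (fun _ _ _ => hb _ _)
  -- Only the joint continuity of the values of the operator is used from here on.
  generalize rBm (fun ξ η : ι ⊕ κ → ℝ => m (ξ ∘ Sum.inl) (η ∘ Sum.inl)) f g = T at this ⊢
  exact this.comp (by fun_prop : Continuous fun ξ : ι ⊕ κ → ℝ => ((), ξ))

/-- On almost every slice the operator with multiplier `m (ξ ∘ inl) (η ∘ inl)` is the operator with
multiplier `m` applied to the slices. -/
theorem rBm_slice_ae {ι κ : Type} [Fintype ι] [Fintype κ] {f g : (ι ⊕ κ → ℝ) → ℂ}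
    (hf : rSL1 f) (hg : rSL1 g) (hfm : StronglyMeasurable f)
    (hgm : StronglyMeasurable g) {m : (ι → ℝ) → (ι → ℝ) → ℂ}
    (hm : Continuous fun z : (ι → ℝ) × (ι → ℝ) => m z.1 z.2) {Cm : ℝ}
    (hb : ∀ ξ η, ‖m ξ η‖ ≤ Cm) :
    ∀ᵐ x' : κ → ℝ, rSL1 (fun s : ι → ℝ => f (Sum.elim s x')) ∧
      rSL1 (fun s : ι → ℝ => g (Sum.elim s x')) ∧ ∀ s : ι → ℝ,
      rBm (fun ξ η : ι ⊕ κ → ℝ => m (ξ ∘ Sum.inl) (η ∘ Sum.inl)) f g (Sum.elim s x') =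
        rBm m (fun s => f (Sum.elim s x')) (fun s => g (Sum.elim s x')) s := by
  filter_upwards [slice hf hfm, slice hg hgm] with x' hF hG
  refine ⟨hF.1, hG.1, fun s => ?_⟩
  rw [rBm_slice hf hg hm hb, rBm_eq]
  refine integral_congr_ae ?_
  filter_upwards [hF.2] with τ hτ
  rw [hτ]
  congr 1
  refine integral_congr_ae ?_
  filter_upwards [hG.2] with σ hσ
  rw [hσ]

/-- Hölder's inequality with exponents `p₁ / p` and `p₂ / p`, in the form needed for slice norms. -/
theorem lintegral_holder {α : Type*} [MeasurableSpace α] (μ : Measure α) {p p₁ p₂ : ℝ}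
    (h1 : 0 < p₁) (h2 : 0 < p₂) (hp : 0 < p) (hrel : 1/p₁ + 1/p₂ = 1/p)
    {a b : α → ℝ≥0∞} (ha : Measurable a) (hb : Measurable b) {A B C : ℝ≥0∞} (hC : C ≠ ⊤)
    (hA : ∫⁻ x, a x ^ p₁ ∂μ = A ^ p₁) (hB : ∫⁻ x, b x ^ p₂ ∂μ = B ^ p₂) :
    ∫⁻ x, (C * a x * b x) ^ p ∂μ ≤ (C * A * B) ^ p := by
  have hold : ∫⁻ x, a x ^ p * b x ^ p ∂μ ≤ A ^ p * B ^ p := by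
    have := ENNReal.lintegral_mul_le_Lp_mul_Lq μ (holderConjugate_div h1 h2 hp hrel)
      (f := fun x => a x ^ p) (g := fun x => b x ^ p) (ha.pow_const _).aemeasurable
      (hb.pow_const _).aemeasurable
    refine this.trans (le_of_eq ?_)
    simp only [← ENNReal.rpow_mul, mul_div_cancel₀ _ hp.ne']
    rw [hA, hB, ← ENNReal.rpow_mul, ← ENNReal.rpow_mul]
    congr 2 <;> field_simp
  simp only [ENNReal.mul_rpow_of_nonneg _ _ hp.le, mul_assoc]
  rw [lintegral_const_mul' _ _ (ENNReal.rpow_ne_top_of_nonneg hp.le hC)]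
  exact mul_le_mul_right hold _

/-- The product case for strongly measurable `f` and `g`, for which the slices and partial transforms
are measurable. -/
theorem BMB_prod_sm {ι κ : Type} [Fintype ι] [Fintype κ] {p p₁ p₂ : ℝ}
    (h1 : 0 < p₁) (h2 : 0 < p₂) (hp : 0 < p) (hrel : 1/p₁ + 1/p₂ = 1/p)
    {m : (ι → ℝ) → (ι → ℝ) → ℂ}
    (hm : Continuous fun z : (ι → ℝ) × (ι → ℝ) => m z.1 z.2) {Cm : ℝ}
    (hb : ∀ ξ η, ‖m ξ η‖ ≤ Cm) {C : ℝ≥0∞} (hC : C ≠ ⊤) (H : BMB ι p₁ p₂ p m C)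
    {f g : (ι ⊕ κ → ℝ) → ℂ} (hf : rSL1 f) (hg : rSL1 g) (hfm : StronglyMeasurable f)
    (hgm : StronglyMeasurable g) :
    eLpNorm (rBm (fun ξ η : ι ⊕ κ → ℝ => m (ξ ∘ Sum.inl) (η ∘ Sum.inl)) f g)
        (ENNReal.ofReal p) volume ≤
      C * eLpNorm f (ENNReal.ofReal p₁) volume * eLpNorm g (ENNReal.ofReal p₂) volume := by
  have hTc : Continuous (rBm (fun ξ η : ι ⊕ κ → ℝ => m (ξ ∘ Sum.inl) (η ∘ Sum.inl)) f g) :=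
    continuous_rBm_inl hf hg hm hb
  have hsl := rBm_slice_ae hf hg hfm hgm hm hb
  generalize rBm (fun ξ η : ι ⊕ κ → ℝ => m (ξ ∘ Sum.inl) (η ∘ Sum.inl)) f g = T at hTc hsl ⊢
  refine (ENNReal.rpow_le_rpow_iff hp).1 ?_
  rw [← lintegral_slice_norm hp hTc.measurable]
  refine (lintegral_mono_ae ?_).trans (lintegral_holder volume h1 h2 hp hrel
    (measurable_slice_norm h1 hfm.measurable) (measurable_slice_norm h2 hgm.measurable) hC
    (lintegral_slice_norm h1 hfm.measurable) (lintegral_slice_norm h2 hgm.measurable))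
  filter_upwards [hsl] with x' hx
  rw [funext hx.2.2]
  exact ENNReal.rpow_le_rpow (H _ _ hx.1 hx.2.1) hp.le

/-- The product case: the operator only sees `f` and `g` through their Fourier transforms, so they may be
replaced by strongly measurable representatives. -/
theorem BMB_prod {ι κ : Type} [Fintype ι] [Fintype κ] {p p₁ p₂ : ℝ}
    (h1 : 0 < p₁) (h2 : 0 < p₂) (hp : 0 < p) (hrel : 1/p₁ + 1/p₂ = 1/p)
    {m : (ι → ℝ) → (ι → ℝ) → ℂ}
    (hm : Continuous fun z : (ι → ℝ) × (ι → ℝ) => m z.1 z.2) {Cm : ℝ}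
    (hb : ∀ ξ η, ‖m ξ η‖ ≤ Cm) {C : ℝ≥0∞} (hC : C ≠ ⊤) (H : BMB ι p₁ p₂ p m C) :
    BMB (ι ⊕ κ) p₁ p₂ p (fun ξ η => m (ξ ∘ Sum.inl) (η ∘ Sum.inl)) C := by
  intro f g hf hg
  obtain ⟨f', hfm, hfe⟩ := hf.1.1
  obtain ⟨g', hgm, hge⟩ := hg.1.1
  have hf' : rSL1 f' := ⟨hf.1.congr hfe, rft_congr_ae hfe ▸ hf.2⟩
  have hg' : rSL1 g' := ⟨hg.1.congr hge, rft_congr_ae hge ▸ hg.2⟩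
  have := BMB_prod_sm (κ := κ) h1 h2 hp hrel hm hb hC H hf' hg' hfm hgm
  unfold rBm at this ⊢
  rwa [rft_congr_ae hfe, rft_congr_ae hge, eLpNorm_congr_ae hfe, eLpNorm_congr_ae hge]

/-! ### Arbitrary directions -/

/-- The product case on `ℝ^{n+1}`, with any coordinate `k0` playing the role of the first factor. -/
theorem BMB_coord {n : ℕ} (k0 : Fin (n + 1)) {p p₁ p₂ : ℝ}
    (h1 : 0 < p₁) (h2 : 0 < p₂) (hp : 0 < p) (hrel : 1/p₁ + 1/p₂ = 1/p)
    {m : (Unit → ℝ) → (Unit → ℝ) → ℂ}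
    (hm : Continuous fun z : (Unit → ℝ) × (Unit → ℝ) => m z.1 z.2) {Cm : ℝ}
    (hb : ∀ ξ η, ‖m ξ η‖ ≤ Cm) {C : ℝ≥0∞} (hC : C ≠ ⊤) (H : BMB Unit p₁ p₂ p m C) :
    BMB (Fin (n + 1)) p₁ p₂ p (fun ω θ => m (fun _ => ω k0) (fun _ => θ k0)) C := by
  have hcard : Fintype.card (Unit ⊕ Fin n) = Fintype.card (Fin (n + 1)) := by
    simp [add_comm]
  set σ₀ : Unit ⊕ Fin n ≃ Fin (n + 1) := Fintype.equivOfCardEq hcard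
  -- The swap makes the distinguished element correspond to `k0`.
  set σ : Unit ⊕ Fin n ≃ Fin (n + 1) := σ₀.trans (Equiv.swap (σ₀ (Sum.inl ())) k0) with hσ
  have hσ0 : σ.symm k0 = Sum.inl () := by
    rw [Equiv.symm_apply_eq, hσ]; simp
  have happ : ∀ (ω : Unit ⊕ Fin n → ℝ) (i : Fin (n + 1)),
      MeasurableEquiv.piCongrLeft (fun _ : Fin (n + 1) => ℝ) σ ω i = ω (σ.symm i) := by
    intro ω i
    obtain ⟨j, rfl⟩ := σ.surjective i
    rw [MeasurableEquiv.coe_piCongrLeft, Equiv.piCongrLeft_apply_apply, Equiv.symm_apply_apply]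
  have hmp := (volume_measurePreserving_piCongrLeft (fun _ : Fin (n + 1) => ℝ) σ).map_eq
  refine BMB_transfer h1 h2 hp hrel (MeasurableEquiv.piCongrLeft (fun _ : Fin (n + 1) => ℝ) σ)
    (MeasurableEquiv.piCongrLeft (fun _ : Fin (n + 1) => ℝ) σ) 1 one_ne_zero ENNReal.one_ne_top
    (by rw [hmp, one_smul]) (by rw [hmp, inv_one, one_smul]) (fun ω θ => ?_) (fun ω u => ?_) ?_
  · ext i; simp only [happ, Pi.add_apply]
  · unfold rch
    simp only [happ]
    rw [Equiv.sum_comp σ.symm (fun j => ω j * u j)]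
  · simp only [happ, hσ0]
    exact BMB_prod h1 h2 hp hrel hm hb hC H

/-- An invertible matrix acting on `ℝ^ι`, as a measurable equivalence. -/
def matE {ι : Type} [Fintype ι] [DecidableEq ι] (A : Matrix ι ι ℝ) (hA : A.det ≠ 0) :
    (ι → ℝ) ≃ᵐ (ι → ℝ) :=
  (Matrix.toLin'OfInv (M := A⁻¹) (M' := A)
    (Matrix.nonsing_inv_mul A (isUnit_iff_ne_zero.2 hA))
    (Matrix.mul_nonsing_inv A (isUnit_iff_ne_zero.2
      hA))).toContinuousLinearEquiv.toHomeomorph.toMeasurableEquiv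

theorem matE_coe {ι : Type} [Fintype ι] [DecidableEq ι] (A : Matrix ι ι ℝ) (hA : A.det ≠ 0) :
    ⇑(matE A hA) = ⇑(Matrix.toLin' A) := by
  unfold matE
  ext v
  simp

theorem matE_apply {ι : Type} [Fintype ι] [DecidableEq ι] (A : Matrix ι ι ℝ) (hA : A.det ≠ 0)
    (v : ι → ℝ) : matE A hA v = A.mulVec v := by
  rw [matE_coe, Matrix.toLin'_apply]

theorem matE_map {ι : Type} [Fintype ι] [DecidableEq ι] (A : Matrix ι ι ℝ) (hA : A.det ≠ 0) :
    Measure.map (matE A hA) volume = ENNReal.ofReal |(A.det)⁻¹| • volume := by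
  rw [matE_coe]
  exact Real.map_matrix_volume_pi_eq_smul_volume_pi hA

/-- The bound for a direction `y ≠ 0`, by a linear change of variables with a matrix sending the first
basis vector to `y`. -/
theorem BMB_dir {n : ℕ} {y : Fin (n + 1) → ℝ} (hy : y ≠ 0) {p p₁ p₂ : ℝ}
    (h1 : 0 < p₁) (h2 : 0 < p₂) (hp : 0 < p) (hrel : 1/p₁ + 1/p₂ = 1/p)
    {m : (Unit → ℝ) → (Unit → ℝ) → ℂ}
    (hm : Continuous fun z : (Unit → ℝ) × (Unit → ℝ) => m z.1 z.2) {Cm : ℝ}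
    (hb : ∀ ξ η, ‖m ξ η‖ ≤ Cm) {C : ℝ≥0∞} (hC : C ≠ ⊤) (H : BMB Unit p₁ p₂ p m C) :
    BMB (Fin (n + 1)) p₁ p₂ p
      (fun ξ η => m (fun _ => ∑ i, ξ i * y i) (fun _ => ∑ i, η i * y i)) C := by
  obtain ⟨L, hL⟩ := SeparatingDual.exists_continuousLinearEquiv_apply_eq (R := ℝ)
    (x := (Pi.single 0 1 : Fin (n + 1) → ℝ)) (y := y) (by simp) hy
  set A : Matrix (Fin (n + 1)) (Fin (n + 1)) ℝ :=
    LinearMap.toMatrix' (L.toLinearEquiv : (Fin (n + 1) → ℝ) →ₗ[ℝ] (Fin (n + 1) → ℝ)) with hAdef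
  have hAy : A.mulVec (Pi.single 0 1) = y := by
    rw [hAdef, LinearMap.toMatrix'_mulVec]; exact hL
  have hA : A.det ≠ 0 := by
    rw [hAdef, LinearMap.det_toMatrix']
    exact (LinearEquiv.isUnit_det' L.toLinearEquiv).ne_zero
  have hB : (A⁻¹.transpose).det ≠ 0 := by
    rw [Matrix.det_transpose, Matrix.det_nonsing_inv, Ring.inverse_eq_inv']
    exact inv_ne_zero hA
  have hpair : ∀ ω u : Fin (n + 1) → ℝ,
      ∑ i, (A⁻¹.transpose.mulVec ω) i * (A.mulVec u) i = ∑ i, ω i * u i := by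
    intro ω u
    change (A⁻¹.transpose.mulVec ω) ⬝ᵥ (A.mulVec u) = ω ⬝ᵥ u
    rw [Matrix.mulVec_transpose, ← Matrix.dotProduct_mulVec, Matrix.mulVec_mulVec,
      Matrix.nonsing_inv_mul A (isUnit_iff_ne_zero.2 hA), Matrix.one_mulVec]
  have hdet : 0 < |(A.det)⁻¹| := abs_pos.2 (inv_ne_zero hA)
  refine BMB_transfer h1 h2 hp hrel (matE A hA) (matE A⁻¹.transpose hB)
    (ENNReal.ofReal |(A.det)⁻¹|) (by simpa using hA) ENNReal.ofReal_ne_top (matE_map A hA) ?_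
    (fun ω θ => ?_) (fun ω u => ?_) ?_
  · rw [matE_map, ← ENNReal.ofReal_inv_of_pos hdet, Matrix.det_transpose,
      Matrix.det_nonsing_inv, Ring.inverse_eq_inv', abs_inv]
  · simp only [matE_apply, Matrix.mulVec_add]
  · unfold rch
    simp only [matE_apply, hpair]
  · have hk : ∀ ω : Fin (n + 1) → ℝ, ∑ i, (matE A⁻¹.transpose hB ω) i * y i = ω 0 := by
      intro ω
      rw [← hAy]
      simp only [matE_apply]
      rw [hpair]
      simp [Pi.single_apply]
    simp only [hk]
    exact BMB_coord 0 h1 h2 hp hrel hm hb hC H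

/-- The bound for every direction. For `y = 0` no invertible matrix is available, and the bound follows
by Fatou's lemma from directions tending to `0`. -/
theorem BMB_all {n : ℕ} {p p₁ p₂ : ℝ}
    (h1 : 0 < p₁) (h2 : 0 < p₂) (hp : 0 < p) (hrel : 1/p₁ + 1/p₂ = 1/p)
    {m : (Unit → ℝ) → (Unit → ℝ) → ℂ}
    (hm : Continuous fun z : (Unit → ℝ) × (Unit → ℝ) => m z.1 z.2) {Cm : ℝ}
    (hb : ∀ ξ η, ‖m ξ η‖ ≤ Cm) {C : ℝ≥0∞} (hC : C ≠ ⊤) (H : BMB Unit p₁ p₂ p m C)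
    (y : Fin (n + 1) → ℝ) :
    BMB (Fin (n + 1)) p₁ p₂ p
      (fun ξ η => m (fun _ => ∑ i, ξ i * y i) (fun _ => ∑ i, η i * y i)) C := by
  by_cases hy : y ≠ 0
  · exact BMB_dir hy h1 h2 hp hrel hm hb hC H
  rw [not_not] at hy
  intro f g hf hg
  -- Joint continuity in the direction and the space variable gives both measurability and pointwise
  -- convergence.
  have hcont := continuous_rBm (P := Fin (n + 1) → ℝ) (Cm := Cm) hf hg
    (M := fun y ξ η => m (fun _ => ∑ i, ξ i * y i) (fun _ => ∑ i, η i * y i))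
    (hm.comp (by fun_prop : Continuous fun z : (Fin (n + 1) → ℝ) × (Fin (n + 1) → ℝ) ×
      (Fin (n + 1) → ℝ) => ((fun _ : Unit => ∑ i, z.2.1 i * z.1 i),
        (fun _ : Unit => ∑ i, z.2.2 i * z.1 i)))) (fun _ _ _ => hb _ _)
  have hbd : ∀ y : Fin (n + 1) → ℝ, y ≠ 0 → eLpNorm (rBm (fun ξ η =>
      m (fun _ => ∑ i, ξ i * y i) (fun _ => ∑ i, η i * y i)) f g) (ENNReal.ofReal p) volume ≤
      C * eLpNorm f (ENNReal.ofReal p₁) volume * eLpNorm g (ENNReal.ofReal p₂) volume :=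
    fun y hy => BMB_dir hy h1 h2 hp hrel hm hb hC H f g hf hg
  -- The operators are bundled into one family `T`, indexed by the direction.
  change Continuous fun z : (Fin (n + 1) → ℝ) × (Fin (n + 1) → ℝ) =>
    (fun w => rBm (fun ξ η => m (fun _ => ∑ i, ξ i * w i) (fun _ => ∑ i, η i * w i)) f g)
      z.1 z.2 at hcont
  change ∀ w : Fin (n + 1) → ℝ, w ≠ 0 → eLpNorm ((fun w => rBm (fun ξ η =>
    m (fun _ => ∑ i, ξ i * w i) (fun _ => ∑ i, η i * w i)) f g) w) (ENNReal.ofReal p) volume ≤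
      C * eLpNorm f (ENNReal.ofReal p₁) volume * eLpNorm g (ENNReal.ofReal p₂) volume at hbd
  change eLpNorm ((fun w => rBm (fun ξ η =>
    m (fun _ => ∑ i, ξ i * w i) (fun _ => ∑ i, η i * w i)) f g) y) (ENNReal.ofReal p) volume ≤ _
  revert hbd hcont
  generalize (fun w : Fin (n + 1) → ℝ => rBm (fun ξ η =>
      m (fun _ => ∑ i, ξ i * w i) (fun _ => ∑ i, η i * w i)) f g) = T
  intro hcont hbd
  subst hy
  set v : ℕ → Fin (n + 1) → ℝ := fun k _ => 1 / ((k : ℝ) + 1) with hv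
  have hv0 : ∀ k, v k ≠ 0 := fun k h => by
    have : 1 / ((k : ℝ) + 1) = 0 := congrFun h 0
    exact absurd this (by positivity)
  have hvl : Tendsto v atTop (𝓝 0) :=
    tendsto_pi_nhds.2 fun _ => tendsto_one_div_add_atTop_nhds_zero_nat
  have hlim := Lp.eLpNorm_lim_le_liminf_eLpNorm (p := ENNReal.ofReal p)
    (μ := (volume : Measure (Fin (n + 1) → ℝ))) (f := fun k => T (v k))
    (fun k => (hcont.comp (by fun_prop : Continuous fun x : Fin (n + 1) → ℝ =>
      (v k, x))).aestronglyMeasurable) (T 0) (Eventually.of_forall fun x =>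
      (hcont.comp (by fun_prop : Continuous fun w : Fin (n + 1) → ℝ =>
        (w, x))).continuousAt.tendsto.comp hvl)
  refine hlim.trans (liminf_le_of_frequently_le' (Frequently.of_forall fun k => ?_))
  exact hbd (v k) (hv0 k)

theorem stmt10 (d : ℕ) (hd : 1 ≤ d)
    (p p₁ p₂ : ℝ) (h1 : 1 ≤ p₁) (h2 : 1 ≤ p₂) (hp : 0 < p)
    (hrel : 1/p₁ + 1/p₂ = 1/p)
    -- `m ∈ C_b(ℝ²)`, where `ℝ ≅ (Unit → ℝ)`
    (m : (Unit → ℝ) → (Unit → ℝ) → ℂ)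
    (hmc : Continuous fun z : ((Unit → ℝ) × (Unit → ℝ)) => m z.1 z.2)
    (Cm : ℝ) (hmB : ∀ ξ η, ‖m ξ η‖ ≤ Cm)
    (hm : rBMnorm Unit p₁ p₂ p m ≠ ⊤) :
    ⨆ y : Fin d → ℝ,
        rBMnorm (Fin d) p₁ p₂ p
          (fun ξ η => m (fun _ => ∑ i, ξ i * y i) (fun _ => ∑ i, η i * y i)) ≤
      ENNReal.ofReal (cc p p₁ p₂) * rBMnorm Unit p₁ p₂ p m := by
  obtain ⟨n, rfl⟩ : ∃ n, d = n + 1 := ⟨d - 1, by omega⟩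
  have hle : ∀ y : Fin (n + 1) → ℝ, rBMnorm (Fin (n + 1)) p₁ p₂ p
      (fun ξ η => m (fun _ => ∑ i, ξ i * y i) (fun _ => ∑ i, η i * y i)) ≤
      rBMnorm Unit p₁ p₂ p m := by
    intro y
    refine le_sInf fun C hC => ?_
    rcases eq_or_ne C ⊤ with rfl | hC'
    · exact le_top
    · exact sInf_le (BMB_all (by linarith) (by linarith) hp hrel hmc hmB hC' hC y)
  refine (iSup_le hle).trans ?_
  refine le_mul_of_one_le_left zero_le ?_
  rw [← ENNReal.ofReal_one]
  exact ENNReal.ofReal_le_ofReal (one_le_cc h1 h2 hp)
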